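/- Let λ=(λ_1,…,λ_r) and μ=(μ_1,…,μ_r) be partitions (zero parts allowed) with μ⊆λ, and let s=(s_{ij})∈W^diag_{λ/μ} with common diagonal values a_k. Assume Re(s_{i,λ_i})>1 for all 1≤i≤r. Then ζ_{λ/μ}(s) = det[ ζ⋆(a_{μ_j−j+1}, a_{μ_j−j+2}, …, a_{μ_j−j+(λ_i−μ_j−i+j)}) ]_{1≤i,j≤r}, where the (i,j) entry is understood to be 1 if λ_i−μ_j−i+j=0 and 0 if λ_i−μ_j−i+j<0 (skew Jacobi–Trudi formula of H-type). -/

import Mathlib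

/-!
The formula is first proved for truncated sums, where all entries are at most `N` and an entry `v`
on the diagonal of content `k` has an arbitrary weight `w k v`; then `N` tends to infinity.

*Truncated formula* (`SMZ.sum_bddFin_eq_det`), by induction on `N`. Removing the entries `N + 1`
from a tableau of shape `λ/μ` leaves a tableau of shape `ν/μ` with `λ (i+1) ≤ ν i ≤ λ i`
(`SMZ.sum_bddFin_succ`). The determinant obeys the same rule (`SMZ.det_jt_succ`): the truncated
zeta-star sums `h_N(p, q)` over the indices `p ≤ k < q` satisfy
`h_{N+1}(p, q) = h_N(p, q) + w (q-1) (N+1) * h_{N+1}(p, q-1)`, so subtracting from row `i` the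
suitable multiple of row `i + 1` leaves the sum over `λ (i+1) ≤ ν i ≤ λ i` of multiples of the
`h_N(p, ν i - i)`, and the determinant expands by multilinearity. For `N = 0` both sides are `1`
if `λ = μ` and `0` otherwise.

*Limit.* A zeta-star series converges absolutely if all exponents have real part at least `1` and
the last one has real part greater than `1` (`SMZ.summable_star`). The hypotheses do not ensure
this for every entry of the matrix: when `λ/μ` is disconnected or has empty rows, some entries
involve values `a k` that belong to no box. Such entries occur only in terms of the Leibniz
expansion that also contain a zero factor (`SMZ.content_covered`), so the truncated determinants
still converge to the stated one (`SMZ.tendsto_det`). Applied to the real parts of the exponents,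
this bounds the sums of absolute values, which makes the skew Schur series absolutely convergent
(`SMZ.summable_skew`).
-/

open scoped BigOperators

noncomputable section

namespace SMZ

/-- Box `(i,j)` (0-indexed) lies in the Young diagram of the partition `lam`. -/
def InDiag (lam : ℕ → ℕ) (p : ℕ × ℕ) : Prop := p.2 < lam p.1

/-- `(i,j)` is a corner of the Young diagram of `lam`. -/
def IsCorner (lam : ℕ → ℕ) (p : ℕ × ℕ) : Prop :=
  InDiag lam p ∧ ¬ InDiag lam (p.1 + 1, p.2) ∧ ¬ InDiag lam (p.1, p.2 + 1)

/-- `lam` is the part function of a partition with exactly `r` positive parts. -/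
def IsPartitionWith (r : ℕ) (lam : ℕ → ℕ) : Prop :=
  Antitone lam ∧ ∀ i, 0 < lam i ↔ i < r

/-- Semi-standard Young tableau of shape `lam`, normalized to be `0` off the diagram. -/
structure IsSSYT (lam : ℕ → ℕ) (m : ℕ × ℕ → ℕ) : Prop where
  zero_off : ∀ p, ¬ InDiag lam p → m p = 0
  pos : ∀ p, InDiag lam p → 0 < m p
  row_le : ∀ i j, InDiag lam (i, j + 1) → m (i, j) ≤ m (i, j + 1)
  col_lt : ∀ i j, InDiag lam (i + 1, j) → m (i, j) < m (i + 1, j)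

/-- The summand `1 / M^s` of the Schur multiple zeta series. -/
def term (r : ℕ) (lam : ℕ → ℕ) (s : ℕ × ℕ → ℂ) (m : ℕ × ℕ → ℕ) : ℂ :=
  ∏ i ∈ Finset.range r, ∏ j ∈ Finset.range (lam i), (m (i, j) : ℂ) ^ (-(s (i, j)))

/-- The Schur multiple zeta function `ζ_λ(s)`. -/
def schurZeta (r : ℕ) (lam : ℕ → ℕ) (s : ℕ × ℕ → ℂ) : ℂ :=
  ∑' M : {m : ℕ × ℕ → ℕ // IsSSYT lam m}, term r lam s M.1

/-- The region `W_λ` of (sufficient) absolute convergence. -/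
def MemW (lam : ℕ → ℕ) (s : ℕ × ℕ → ℂ) : Prop :=
  (∀ p, InDiag lam p → 1 ≤ (s p).re) ∧ ∀ p, IsCorner lam p → 1 < (s p).re

/-- Euler–Zagier multiple zeta function. -/
def mzv {n : ℕ} (s : Fin n → ℂ) : ℂ :=
  ∑' f : {f : Fin n → ℕ // StrictMono f ∧ ∀ i, 0 < f i},
    ∏ i, (f.1 i : ℂ) ^ (-(s i))

/-- Euler–Zagier multiple zeta-star function. -/
def mzvStar {n : ℕ} (s : Fin n → ℂ) : ℂ :=
  ∑' f : {f : Fin n → ℕ // Monotone f ∧ ∀ i, 0 < f i},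
    ∏ i, (f.1 i : ℂ) ^ (-(s i))

/-- `ζ⋆(a start, a (start+1), …)` with `len` terms; `1` if `len = 0`, `0` if `len < 0`. -/
def mzvStarSeq (a : ℤ → ℂ) (start len : ℤ) : ℂ :=
  if len < 0 then 0 else mzvStar fun i : Fin len.toNat => a (start + (i : ℕ))

/-- `ζ(a start, a (start-1), …)` with `len` terms; `1` if `len = 0`, `0` if `len < 0`. -/
def mzvSeqDesc (a : ℤ → ℂ) (start len : ℤ) : ℂ :=
  if len < 0 then 0 else mzv fun i : Fin len.toNat => a (start - (i : ℕ))

/-- The conjugate partition: `conjPart r lam c` is the number of rows `i < r` with a box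
in column `c`, i.e. the (0-indexed) `c`-th part of `λ'`. -/
def conjPart (r : ℕ) (lam : ℕ → ℕ) (c : ℕ) : ℕ :=
  ((Finset.range r).filter fun i => c < lam i).card

end SMZ
namespace SMZ

/-- Box `(i,j)` (0-indexed) lies in the skew Young diagram `λ/μ`. -/
def InSkew (lam mu : ℕ → ℕ) (p : ℕ × ℕ) : Prop := mu p.1 ≤ p.2 ∧ p.2 < lam p.1

/-- `(i,j)` is a corner of the skew diagram `λ/μ`. -/
def IsSkewCorner (lam mu : ℕ → ℕ) (p : ℕ × ℕ) : Prop :=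
  InSkew lam mu p ∧ ¬ InSkew lam mu (p.1 + 1, p.2) ∧ ¬ InSkew lam mu (p.1, p.2 + 1)

/-- `(lam, mu)` is a skew pair with at most `r` rows (zero parts allowed). -/
def IsSkewPairWith (r : ℕ) (lam mu : ℕ → ℕ) : Prop :=
  Antitone lam ∧ Antitone mu ∧ (∀ i, mu i ≤ lam i) ∧ ∀ i, r ≤ i → lam i = 0

/-- Semi-standard Young tableau of skew shape `λ/μ`, normalized to be `0` off the diagram. -/
structure IsSkewSSYT (lam mu : ℕ → ℕ) (m : ℕ × ℕ → ℕ) : Prop where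
  zero_off : ∀ p, ¬ InSkew lam mu p → m p = 0
  pos : ∀ p, InSkew lam mu p → 0 < m p
  row_le : ∀ i j, InSkew lam mu (i, j) → InSkew lam mu (i, j + 1) → m (i, j) ≤ m (i, j + 1)
  col_lt : ∀ i j, InSkew lam mu (i, j) → InSkew lam mu (i + 1, j) → m (i, j) < m (i + 1, j)

/-- The summand `1 / M^s` of the skew Schur multiple zeta series. -/
def skewTerm (r : ℕ) (lam mu : ℕ → ℕ) (s : ℕ × ℕ → ℂ) (m : ℕ × ℕ → ℕ) : ℂ :=
  ∏ i ∈ Finset.range r, ∏ j ∈ Finset.Ico (mu i) (lam i), (m (i, j) : ℂ) ^ (-(s (i, j)))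

/-- The skew Schur multiple zeta function `ζ_{λ/μ}(s)`. -/
def skewSchurZeta (r : ℕ) (lam mu : ℕ → ℕ) (s : ℕ × ℕ → ℂ) : ℂ :=
  ∑' M : {m : ℕ × ℕ → ℕ // IsSkewSSYT lam mu m}, skewTerm r lam mu s M.1

/-- The region `W_{λ/μ}` of (sufficient) absolute convergence. -/
def MemWSkew (lam mu : ℕ → ℕ) (s : ℕ × ℕ → ℂ) : Prop :=
  (∀ p, InSkew lam mu p → 1 ≤ (s p).re) ∧ ∀ p, IsSkewCorner lam mu p → 1 < (s p).re

end SMZ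
namespace SMZ

/-! ### Bounded tableaux and removal of the largest entry -/

/-- The weight of a filling `m` of `λ/μ`, where an entry `v` on the diagonal of content `k`
contributes `w k v`. -/
def wt (w : ℤ → ℕ → ℂ) (r : ℕ) (lam mu : ℕ → ℕ) (m : ℕ × ℕ → ℕ) : ℂ :=
  ∏ i ∈ Finset.range r, ∏ j ∈ Finset.Ico (mu i) (lam i), w ((j : ℤ) - (i : ℤ)) (m (i, j))

/-- The semi-standard tableaux of shape `λ/μ` with entries at most `N`. The set is empty unless
`μ ⊆ λ`; this convention lets the recursion on `N` run over all strips `ν ⊆ λ`, including those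
not containing `μ`. -/
def BddSSYT (N : ℕ) (lam mu : ℕ → ℕ) : Set (ℕ × ℕ → ℕ) :=
  {m | (∀ i, mu i ≤ lam i) ∧ IsSkewSSYT lam mu m ∧ ∀ p, m p ≤ N}

lemma finite_bddSSYT (r N : ℕ) (lam mu : ℕ → ℕ) (hanti : Antitone lam)
    (hz : ∀ i, r ≤ i → lam i = 0) : (BddSSYT N lam mu).Finite := by
  refine Set.Finite.of_finite_image (f := fun m : ℕ × ℕ → ℕ =>
    fun q : Fin r × Fin (lam 0) => (Fin.ofNat (N + 1) (m (q.1, q.2)))) (Set.toFinite _) ?_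
  rintro m ⟨-, hm, hmN⟩ m' ⟨-, hm', hmN'⟩ h
  funext ⟨i, j⟩
  by_cases hp : InSkew lam mu (i, j)
  · have hi : i < r := by
      by_contra hi
      have h1 := hz i (by omega)
      have h2 : j < lam i := hp.2
      omega
    have hj : j < lam 0 := lt_of_lt_of_le hp.2 (hanti (Nat.zero_le i))
    have := congrArg Fin.val (congrFun h (⟨i, hi⟩, ⟨j, hj⟩))
    simp only [Fin.val_ofNat] at this
    rwa [Nat.mod_eq_of_lt (Nat.lt_succ_of_le (hmN _)),
      Nat.mod_eq_of_lt (Nat.lt_succ_of_le (hmN' _))] at this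
  · rw [hm.zero_off _ hp, hm'.zero_off _ hp]

open Classical in
/-- `BddSSYT` as a finset. The fallback value `∅` never occurs for partitions `λ`. -/
def bddFin (N : ℕ) (lam mu : ℕ → ℕ) : Finset (ℕ × ℕ → ℕ) :=
  if h : (BddSSYT N lam mu).Finite then h.toFinset else ∅

lemma mem_bddFin {r N : ℕ} {lam mu : ℕ → ℕ} (hanti : Antitone lam)
    (hz : ∀ i, r ≤ i → lam i = 0) {m : ℕ × ℕ → ℕ} :
    m ∈ bddFin N lam mu ↔ m ∈ BddSSYT N lam mu := by
  simp [bddFin, finite_bddSSYT r N lam mu hanti hz]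

/-- Extension of a list of `r` row lengths by zero. -/
def extz {r : ℕ} (nu : Fin r → ℕ) (i : ℕ) : ℕ := if h : i < r then nu ⟨i, h⟩ else 0

/-- Row lengths of the subdiagram of `λ` occupied by `μ` and the entries of `m` that are at
most `N`: in each row, the first column `k ≥ μ i` that lies outside `λ` or has entry `> N`. -/
def cut (lam mu : ℕ → ℕ) (N : ℕ) (m : ℕ × ℕ → ℕ) (i : ℕ) : ℕ :=
  sInf {k | mu i ≤ k ∧ (lam i ≤ k ∨ N < m (i, k))}

lemma cut_spec (lam mu : ℕ → ℕ) (N : ℕ) (m : ℕ × ℕ → ℕ) (i : ℕ) :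
    mu i ≤ cut lam mu N m i ∧ (lam i ≤ cut lam mu N m i ∨ N < m (i, cut lam mu N m i)) :=
  Nat.sInf_mem (s := {k | mu i ≤ k ∧ (lam i ≤ k ∨ N < m (i, k))})
    ⟨max (mu i) (lam i), le_max_left _ _, Or.inl (le_max_right _ _)⟩

lemma cut_min {lam mu : ℕ → ℕ} {N : ℕ} {m : ℕ × ℕ → ℕ} {i k : ℕ} (h1 : mu i ≤ k)
    (h2 : lam i ≤ k ∨ N < m (i, k)) : cut lam mu N m i ≤ k :=
  Nat.sInf_le (s := {k | mu i ≤ k ∧ (lam i ≤ k ∨ N < m (i, k))}) ⟨h1, h2⟩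

lemma row_mono {lam mu : ℕ → ℕ} {m : ℕ × ℕ → ℕ} (hm : IsSkewSSYT lam mu m) {i j k : ℕ}
    (h1 : mu i ≤ j) (h2 : j ≤ k) (h3 : k < lam i) : m (i, j) ≤ m (i, k) := by
  induction k, h2 using Nat.le_induction with
  | base => exact le_rfl
  | succ k hk ih =>
    exact (ih (by omega)).trans (hm.row_le i k ⟨by simp; omega, by simp; omega⟩
      ⟨by simp; omega, by simp; omega⟩)

/-- The horizontal strips of `λ`: all `ν` interlacing `λ`. -/
def strips (r : ℕ) (lam : ℕ → ℕ) : Finset (Fin r → ℕ) :=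
  Fintype.piFinset fun i : Fin r => Finset.Icc (lam (i + 1)) (lam i)

lemma mem_strips {r : ℕ} {lam : ℕ → ℕ} {nu : Fin r → ℕ} :
    nu ∈ strips r lam ↔ ∀ i : Fin r, lam (i + 1) ≤ nu i ∧ nu i ≤ lam i := by
  simp [strips]

lemma extz_le {r : ℕ} {lam : ℕ → ℕ} {nu : Fin r → ℕ} (h : nu ∈ strips r lam) (i : ℕ) :
    extz nu i ≤ lam i := by
  unfold extz
  split_ifs with hi
  · exact (mem_strips.1 h ⟨i, hi⟩).2
  · exact Nat.zero_le _

lemma le_extz {r : ℕ} {lam : ℕ → ℕ} {nu : Fin r → ℕ} (hz : ∀ i, r ≤ i → lam i = 0)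
    (h : nu ∈ strips r lam) (i : ℕ) : lam (i + 1) ≤ extz nu i := by
  unfold extz
  split_ifs with hi
  · exact (mem_strips.1 h ⟨i, hi⟩).1
  · rw [hz (i + 1) (by omega)]

lemma extz_anti {r : ℕ} {lam : ℕ → ℕ} {nu : Fin r → ℕ} (hz : ∀ i, r ≤ i → lam i = 0)
    (h : nu ∈ strips r lam) : Antitone (extz nu) :=
  antitone_nat_of_succ_le fun i => (extz_le h (i + 1)).trans (le_extz hz h i)

lemma extz_zero {r : ℕ} (nu : Fin r → ℕ) (i : ℕ) (hi : r ≤ i) : extz nu i = 0 := by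
  simp [extz, Nat.not_lt.2 hi]

/-- Delete the entries outside the rows of lengths `ν`. -/
def trunc (nu : ℕ → ℕ) (m : ℕ × ℕ → ℕ) (p : ℕ × ℕ) : ℕ := if p.2 < nu p.1 then m p else 0

/-- Fill the boxes of `λ/ν` with the entry `N + 1`. -/
def fillTop (N : ℕ) (lam nu : ℕ → ℕ) (m : ℕ × ℕ → ℕ) (p : ℕ × ℕ) : ℕ :=
  if p.2 < nu p.1 then m p else if p.2 < lam p.1 then N + 1 else 0

section
variable {r N : ℕ} {lam mu : ℕ → ℕ}

lemma cut_le {m : ℕ × ℕ → ℕ} (hm : m ∈ BddSSYT (N + 1) lam mu) (i : ℕ) :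
    cut lam mu N m i ≤ lam i := cut_min (hm.1 i) (Or.inl le_rfl)

lemma cut_extz (hz : ∀ i, r ≤ i → lam i = 0) {m : ℕ × ℕ → ℕ}
    (hm : m ∈ BddSSYT (N + 1) lam mu) :
    extz (fun i : Fin r => cut lam mu N m i) = cut lam mu N m := by
  funext i
  unfold extz
  split_ifs with hi
  · rfl
  · have := cut_le hm i
    rw [hz i (by omega)] at this
    omega

lemma cut_mem_strips (hmu : Antitone mu) (hlam : Antitone lam) {m : ℕ × ℕ → ℕ}
    (hm : m ∈ BddSSYT (N + 1) lam mu) :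
    (fun i : Fin r => cut lam mu N m i) ∈ strips r lam := by
  refine mem_strips.2 fun i => ⟨?_, cut_le hm i⟩
  by_contra hlt
  have hs := cut_spec lam mu N m i
  have h1 : lam (i + 1) ≤ lam i := hlam (Nat.le_succ _)
  have h2 : mu (i + 1) ≤ mu i := hmu (Nat.le_succ _)
  have h3 := hm.2.1.col_lt i (cut lam mu N m i) ⟨by simp; omega, by simp; omega⟩
    ⟨by simp; omega, by simp; omega⟩
  have h4 := hm.2.2 ((i : ℕ) + 1, cut lam mu N m i)
  omega

lemma trunc_mem {m : ℕ × ℕ → ℕ} (hm : m ∈ BddSSYT (N + 1) lam mu) :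
    trunc (cut lam mu N m) m ∈ BddSSYT N (cut lam mu N m) mu := by
  obtain ⟨hle, hs, hb⟩ := hm
  have hc := cut_le ⟨hle, hs, hb⟩
  have hin : ∀ p, InSkew (cut lam mu N m) mu p → InSkew lam mu p :=
    fun p hp => ⟨hp.1, lt_of_lt_of_le hp.2 (hc p.1)⟩
  have htr : ∀ p, InSkew (cut lam mu N m) mu p → trunc (cut lam mu N m) m p = m p :=
    fun p hp => by simp [trunc, hp.2]
  have hoff : ∀ p, ¬ InSkew (cut lam mu N m) mu p → trunc (cut lam mu N m) m p = 0 := by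
    intro p hp
    unfold trunc
    split_ifs with h
    · exact hs.zero_off p fun h' => hp ⟨h'.1, h⟩
    · rfl
  refine ⟨fun i => (cut_spec lam mu N m i).1, ⟨hoff, ?_, ?_, ?_⟩, ?_⟩
  · intro p hp
    rw [htr p hp]
    exact hs.pos p (hin p hp)
  · intro i j h1 h2
    rw [htr _ h1, htr _ h2]
    exact hs.row_le i j (hin _ h1) (hin _ h2)
  · intro i j h1 h2
    rw [htr _ h1, htr _ h2]
    exact hs.col_lt i j (hin _ h1) (hin _ h2)
  · rintro ⟨i, j⟩
    by_cases hp : InSkew (cut lam mu N m) mu (i, j)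
    · rw [htr _ hp]
      by_contra hlt
      have := cut_min (lam := lam) (mu := mu) (N := N) (m := m) hp.1 (Or.inr (not_le.1 hlt))
      have h2 : j < cut lam mu N m i := hp.2
      simp at this
      omega
    · rw [hoff _ hp]
      exact Nat.zero_le _

lemma fillTop_trunc {m : ℕ × ℕ → ℕ} (hm : m ∈ BddSSYT (N + 1) lam mu) :
    fillTop N lam (cut lam mu N m) (trunc (cut lam mu N m) m) = m := by
  funext ⟨i, j⟩
  have hc := cut_spec lam mu N m i
  have hb := hm.2.2 (i, j)
  simp only [fillTop, trunc]
  split_ifs with h1 h2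
  · rfl
  · have := row_mono hm.2.1 hc.1 (not_lt.1 h1) h2
    omega
  · exact (hm.2.1.zero_off _ fun h => h2 h.2).symm

lemma fillTop_mem {nu : ℕ → ℕ} (h1 : ∀ i, nu i ≤ lam i)
    (h2 : ∀ i, lam (i + 1) ≤ nu i)
    {m : ℕ × ℕ → ℕ} (hm : m ∈ BddSSYT N nu mu) : fillTop N lam nu m ∈ BddSSYT (N + 1) lam mu := by
  obtain ⟨hle, hs, hb⟩ := hm
  refine ⟨fun i => (hle i).trans (h1 i), ⟨?_, ?_, ?_, ?_⟩, ?_⟩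
  · rintro ⟨i, j⟩ hp
    have ha := h1 i
    have hb := hle i
    simp only [InSkew] at hp
    simp only [fillTop]
    split_ifs with h3 h4
    · exact hs.zero_off _ fun h => hp ⟨h.1, by omega⟩
    · exact absurd ⟨by omega, h4⟩ hp
    · rfl
  · rintro ⟨i, j⟩ hp
    simp only [InSkew] at hp
    simp only [fillTop]
    split_ifs with h3 h4
    · exact hs.pos _ ⟨hp.1, h3⟩
    · omega
    · omega
  · rintro i j ⟨ha, hb1⟩ ⟨hc, hd⟩
    simp only at ha hb1 hc hd
    have hbb := hb (i, j)
    simp only [fillTop]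
    split_ifs with h3 h4 h5 <;> first | omega | skip
    exact hs.row_le i j ⟨ha, h3⟩ ⟨hc, h4⟩
  · rintro i j ⟨ha, hb1⟩ ⟨hc, hd⟩
    simp only at ha hb1 hc hd
    have hbb := hb (i, j)
    have h2i := h2 i
    simp only [fillTop]
    split_ifs with h3 h4 h5 <;> first | omega | skip
    exact hs.col_lt i j ⟨ha, h3⟩ ⟨hc, h4⟩
  · intro p
    have := hb p
    simp only [fillTop]
    split_ifs <;> omega

lemma cut_fillTop {nu : ℕ → ℕ} (h1 : ∀ i, nu i ≤ lam i)
    {m : ℕ × ℕ → ℕ} (hm : m ∈ BddSSYT N nu mu) : cut lam mu N (fillTop N lam nu m) = nu := by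
  funext i
  refine le_antisymm (cut_min (hm.1 i) ?_) ?_
  · have := h1 i
    simp only [fillTop, lt_irrefl, if_false]
    split_ifs <;> omega
  · by_contra hlt
    have hs := cut_spec lam mu N (fillTop N lam nu m) i
    have hlt' := not_le.1 hlt
    have hb := hm.2.2 (i, cut lam mu N (fillTop N lam nu m) i)
    have := h1 i
    rcases hs.2 with h | h
    · omega
    · simp only [fillTop] at h hlt' hb
      rw [if_pos hlt'] at h
      exact absurd hb (not_le.2 h)

lemma trunc_fillTop {nu : ℕ → ℕ} {m : ℕ × ℕ → ℕ} (hm : m ∈ BddSSYT N nu mu) :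
    trunc nu (fillTop N lam nu m) = m := by
  funext p
  simp only [trunc, fillTop]
  split_ifs with h
  · rfl
  · exact (hm.2.1.zero_off p fun h' => h h'.2).symm

/-- Branching rule: a tableau with entries at most `N + 1` is a tableau with entries at most `N`
of some shape `ν/μ`, together with the horizontal strip `λ/ν` filled with `N + 1`. -/
lemma sum_bddFin_succ (w : ℤ → ℕ → ℂ) (hlam : Antitone lam) (hmu : Antitone mu)
    (hz : ∀ i, r ≤ i → lam i = 0) :
    ∑ m ∈ bddFin (N + 1) lam mu, wt w r lam mu m =
      ∑ nu ∈ strips r lam,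
        (∏ i : Fin r, ∏ j ∈ Finset.Ico (nu i) (lam i), w ((j : ℤ) - ((i : ℕ) : ℤ)) (N + 1)) *
          ∑ m ∈ bddFin N (extz nu) mu, wt w r (extz nu) mu m := by
  simp_rw [Finset.mul_sum]
  rw [Finset.sum_sigma']
  refine Finset.sum_bij' (fun m _ => ⟨fun i : Fin r => cut lam mu N m i,
      trunc (cut lam mu N m) m⟩)
    (fun x _ => fillTop N lam (extz x.1) x.2) ?_ ?_ ?_ ?_ ?_
  · intro m hm
    rw [mem_bddFin hlam hz] at hm
    have hst := cut_mem_strips (r := r) hmu hlam hm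
    refine Finset.mem_sigma.2 ⟨hst, ?_⟩
    rw [mem_bddFin (extz_anti hz hst) (extz_zero _)]
    simp only [cut_extz hz hm]
    exact trunc_mem hm
  · rintro ⟨nu, m⟩ hx
    obtain ⟨hst, hm⟩ := Finset.mem_sigma.1 hx
    rw [mem_bddFin (extz_anti hz hst) (extz_zero _)] at hm
    rw [mem_bddFin hlam hz]
    exact fillTop_mem (extz_le hst) (le_extz hz hst) hm
  · intro m hm
    rw [mem_bddFin hlam hz] at hm
    simp only [cut_extz hz hm]
    exact fillTop_trunc hm
  · rintro ⟨nu, m⟩ hx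
    obtain ⟨hst, hm⟩ := Finset.mem_sigma.1 hx
    rw [mem_bddFin (extz_anti hz hst) (extz_zero _)] at hm
    simp only at hst hm ⊢
    rw [cut_fillTop (extz_le hst) hm, trunc_fillTop hm]
    simp [extz]
  · intro m hm
    rw [mem_bddFin hlam hz] at hm
    simp only [cut_extz hz hm]
    rw [Fin.prod_univ_eq_prod_range (fun i => ∏ j ∈ Finset.Ico (cut lam mu N m i) (lam i),
      w ((j : ℤ) - (i : ℤ)) (N + 1)) r]
    unfold wt
    rw [← Finset.prod_mul_distrib]
    refine Finset.prod_congr rfl fun i _ => ?_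
    have hc := cut_spec lam mu N m i
    rw [← Finset.prod_Ico_consecutive _ hc.1 (cut_le hm i), mul_comm]
    congr 1
    · refine Finset.prod_congr rfl fun j hj => ?_
      rw [Finset.mem_Ico] at hj
      congr 1
      have h1 := row_mono hm.2.1 hc.1 hj.1 hj.2
      have h2 := hm.2.2 (i, j)
      omega
    · refine Finset.prod_congr rfl fun j hj => ?_
      rw [Finset.mem_Ico] at hj
      simp [trunc, hj.2]

open Classical in
lemma sum_bddFin_zero (w : ℤ → ℕ → ℂ) (hlam : Antitone lam) (hz : ∀ i, r ≤ i → lam i = 0) :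
    ∑ m ∈ bddFin 0 lam mu, wt w r lam mu m = if lam = mu then 1 else 0 := by
  split_ifs with h
  · subst h
    have : bddFin 0 lam lam = {fun _ => 0} := by
      ext m
      rw [mem_bddFin hlam hz, Finset.mem_singleton]
      constructor
      · rintro ⟨-, -, hb⟩
        funext p
        exact Nat.le_zero.1 (hb p)
      · rintro rfl
        have hno : ∀ p, ¬ InSkew lam lam p := fun p hp => absurd hp.2 (not_lt.2 hp.1)
        exact ⟨fun _ => le_rfl, ⟨fun _ _ => rfl, fun p hp => absurd hp (hno p),
          fun _ _ hp => absurd hp (hno _), fun _ _ hp => absurd hp (hno _)⟩, fun _ => le_rfl⟩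
    simp [this, wt]
  · refine Finset.sum_eq_zero fun m hm => absurd ?_ h
    rw [mem_bddFin hlam hz] at hm
    funext i
    refine le_antisymm ?_ (hm.1 i)
    by_contra hlt
    have h1 := hm.2.1.pos (i, mu i) ⟨le_rfl, not_le.1 hlt⟩
    have h2 := hm.2.2 (i, mu i)
    omega

end

/-! ### Truncated zeta-star sums -/

open Classical in
/-- Weakly increasing sequences of length `n` with values in `{1, …, N}`. -/
def monoSeq (N n : ℕ) : Finset (Fin n → ℕ) :=
  (Fintype.piFinset fun _ => Finset.Icc 1 N).filter Monotone

lemma mem_monoSeq {N n : ℕ} {f : Fin n → ℕ} :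
    f ∈ monoSeq N n ↔ (∀ i, 1 ≤ f i ∧ f i ≤ N) ∧ Monotone f := by
  simp [monoSeq]

/-- The sum over `1 ≤ m_p ≤ ⋯ ≤ m_{q-1} ≤ N` of `∏ w k m_k`, where the index `k` runs over
`p ≤ k < q`; it is `0` if `q < p`. -/
def hsum (w : ℤ → ℕ → ℂ) (N : ℕ) (p q : ℤ) : ℂ :=
  if q - p < 0 then 0
  else ∑ f ∈ monoSeq N (q - p).toNat, ∏ i : Fin _, w (p + ((i : ℕ) : ℤ)) (f i)

lemma hsum_of_nat (w : ℤ → ℕ → ℂ) (N : ℕ) (p : ℤ) (n : ℕ) :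
    hsum w N p (p + n) = ∑ f ∈ monoSeq N n, ∏ i : Fin _, w (p + ((i : ℕ) : ℤ)) (f i) := by
  have h : (p + (n : ℤ) - p).toNat = n := by simp
  unfold hsum
  rw [if_neg (by omega), h]

lemma hsum_neg (w : ℤ → ℕ → ℂ) (N : ℕ) {p q : ℤ} (h : q < p) : hsum w N p q = 0 := by
  unfold hsum
  rw [if_pos (by omega)]

lemma hsum_self (w : ℤ → ℕ → ℂ) (N : ℕ) (p : ℤ) : hsum w N p p = 1 := by
  have h := hsum_of_nat w N p 0
  have h0 : monoSeq N 0 = {Fin.elim0} := by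
    ext f
    rw [mem_monoSeq, Finset.mem_singleton]
    exact ⟨fun _ => Subsingleton.elim _ _, fun _ => ⟨fun i => i.elim0, fun i => i.elim0⟩⟩
  simpa [h0] using h

lemma hsum_zero (w : ℤ → ℕ → ℂ) (p q : ℤ) : hsum w 0 p q = if p = q then 1 else 0 := by
  split_ifs with h
  · rw [h, hsum_self]
  · rcases lt_or_ge q p with hlt | hge
    · exact hsum_neg w 0 hlt
    · obtain ⟨n, rfl⟩ := Int.le.dest hge
      rw [hsum_of_nat]
      refine Finset.sum_eq_zero fun f hf => ?_
      have hn : 0 < n := by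
        by_contra hn
        exact h (by simp at hn; simp [hn])
      have := (mem_monoSeq.1 hf).1 ⟨0, hn⟩
      omega

/-- A sequence bounded by `N + 1` is bounded by `N`, or its last entry is `N + 1`. -/
lemma hsum_nat_succ (w : ℤ → ℕ → ℂ) (N : ℕ) (p : ℤ) (n : ℕ) :
    ∑ f ∈ monoSeq (N + 1) (n + 1), ∏ i : Fin _, w (p + ((i : ℕ) : ℤ)) (f i) =
      ∑ f ∈ monoSeq N (n + 1), ∏ i : Fin _, w (p + ((i : ℕ) : ℤ)) (f i) +
      w (p + n) (N + 1) * ∑ f ∈ monoSeq (N + 1) n, ∏ i : Fin _, w (p + ((i : ℕ) : ℤ)) (f i) := by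
  rw [← Finset.sum_filter_not_add_sum_filter _ (fun f : Fin (n + 1) → ℕ => f (Fin.last n) = N + 1)]
  congr 1
  · refine Finset.sum_congr ?_ fun _ _ => rfl
    ext f
    simp only [Finset.mem_filter, mem_monoSeq]
    constructor
    · rintro ⟨⟨h1, h2⟩, h3⟩
      refine ⟨fun i => ⟨(h1 i).1, ?_⟩, h2⟩
      have ha := h2 (Fin.le_last i)
      have hb := (h1 (Fin.last n)).2
      omega
    · rintro ⟨h1, h2⟩
      refine ⟨⟨fun i => ⟨(h1 i).1, (h1 i).2.trans (Nat.le_succ _)⟩, h2⟩, ?_⟩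
      have := (h1 (Fin.last n)).2
      omega
  · rw [Finset.mul_sum]
    refine Finset.sum_bij' (fun f _ => fun i => f i.castSucc)
      (fun g _ => Fin.snoc (α := fun _ => ℕ) g (N + 1)) ?_ ?_ ?_ ?_ ?_
    · intro f hf
      simp only [Finset.mem_filter, mem_monoSeq] at hf ⊢
      exact ⟨fun i => hf.1.1 _, fun i j hij => hf.1.2 (Fin.castSucc_le_castSucc_iff.2 hij)⟩
    · intro g hg
      simp only [Finset.mem_filter, mem_monoSeq] at hg ⊢
      refine ⟨⟨fun i => ?_, fun i j hij => ?_⟩, by simp⟩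
      · refine Fin.lastCases ?_ (fun i => ?_) i
        · simp
        · simpa using hg.1 i
      · revert hij
        refine Fin.lastCases ?_ (fun j => ?_) j
        · intro _
          refine Fin.lastCases ?_ (fun i => ?_) i
          · simp
          · simpa using (hg.1 i).2
        · refine Fin.lastCases ?_ (fun i => ?_) i
          · intro h
            exact absurd h (not_le.2 (Fin.castSucc_lt_last j))
          · intro h
            simpa using hg.2 (Fin.castSucc_le_castSucc_iff.1 h)
    · intro f hf
      simp only [Finset.mem_filter] at hf
      funext i
      refine Fin.lastCases ?_ (fun i => ?_) i
      · simp [hf.2]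
      · simp
    · intro g hg
      simp
    · intro f hf
      simp only [Finset.mem_filter] at hf
      rw [Fin.prod_univ_castSucc, hf.2, mul_comm]
      simp

lemma hsum_rec (w : ℤ → ℕ → ℂ) (N : ℕ) (p q : ℤ) :
    hsum w (N + 1) p q = hsum w N p q + w (q - 1) (N + 1) * hsum w (N + 1) p (q - 1) := by
  rcases lt_trichotomy q p with h | rfl | h
  · rw [hsum_neg w _ h, hsum_neg w _ h, hsum_neg w _ (by omega : q - 1 < p)]
    simp
  · rw [hsum_self, hsum_self, hsum_neg w _ (by omega : q - 1 < q)]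
    simp
  · obtain ⟨n, rfl⟩ : ∃ n : ℕ, q = p + ((n + 1 : ℕ) : ℤ) :=
      ⟨(q - p - 1).toNat, by omega⟩
    have h1 : p + ((n + 1 : ℕ) : ℤ) - 1 = p + n := by push_cast; ring
    rw [h1, hsum_of_nat, hsum_of_nat, hsum_of_nat]
    exact hsum_nat_succ w N p n

/-- Iterating `hsum_rec` from `q = l - i` down to `q = l₀ - i`. -/
lemma hsum_telescope (w : ℤ → ℕ → ℂ) (N : ℕ) (p : ℤ) (i l₀ l : ℕ) (h : l₀ ≤ l) :
    hsum w (N + 1) p ((l : ℤ) - i) =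
      ∑ c ∈ Finset.Icc l₀ l, (∏ j ∈ Finset.Ico c l, w ((j : ℤ) - i) (N + 1)) *
          hsum w N p ((c : ℤ) - i) +
        (∏ j ∈ Finset.Ico l₀ l, w ((j : ℤ) - i) (N + 1)) * w ((l₀ : ℤ) - i - 1) (N + 1) *
          hsum w (N + 1) p ((l₀ : ℤ) - i - 1) := by
  induction l, h using Nat.le_induction with
  | base => simpa using hsum_rec w N p ((l₀ : ℤ) - i)
  | succ l hl ih =>
    have h1 : ((l + 1 : ℕ) : ℤ) - i - 1 = (l : ℤ) - i := by push_cast; ring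
    rw [hsum_rec, h1, ih, ← Finset.insert_Icc_right_eq_Icc_add_one (by omega),
      Finset.sum_insert (by simp), Finset.prod_Ico_succ_top hl]
    have h2 : ∑ c ∈ Finset.Icc l₀ l, (∏ j ∈ Finset.Ico c (l + 1), w ((j : ℤ) - i) (N + 1)) *
          hsum w N p ((c : ℤ) - i) = w ((l : ℤ) - i) (N + 1) *
        ∑ c ∈ Finset.Icc l₀ l, (∏ j ∈ Finset.Ico c l, w ((j : ℤ) - i) (N + 1)) *
          hsum w N p ((c : ℤ) - i) := by
      rw [Finset.mul_sum]
      refine Finset.sum_congr rfl fun c hc => ?_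
      rw [Finset.prod_Ico_succ_top (Finset.mem_Icc.1 hc).2]
      ring
    rw [h2, Finset.Ico_self, Finset.prod_empty]
    ring

/-! ### The truncated Jacobi–Trudi formula -/

/-- The Jacobi–Trudi matrix of truncated zeta-star sums. -/
def jt (w : ℤ → ℕ → ℂ) (r N : ℕ) (lam mu : ℕ → ℕ) : Matrix (Fin r) (Fin r) ℂ :=
  Matrix.of fun i j => hsum w N ((mu j : ℤ) - ((j : ℕ) : ℤ)) ((lam i : ℤ) - ((i : ℕ) : ℤ))

/-- Subtracting from each row a multiple of the next one does not change the determinant. -/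
lemma det_row_sub {r : ℕ} (A B : Matrix (Fin r) (Fin r) ℂ) (c : Fin r → ℂ)
    (h : ∀ i j, A i j = B i j + if h : (i : ℕ) + 1 < r then c i * A ⟨i + 1, h⟩ j else 0) :
    A.det = B.det := by
  let M : Matrix (Fin r) (Fin r) ℂ :=
    Matrix.of fun i k => if (k : ℕ) = i + 1 then c i else 0
  have hM : (1 - M) * A = B := by
    ext i j
    rw [sub_mul, one_mul, Matrix.sub_apply, Matrix.mul_apply, h i j]
    simp only [M, Matrix.of_apply, ite_mul, zero_mul]
    split_ifs with hi
    · rw [Finset.sum_eq_single ⟨i + 1, hi⟩]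
      · simp
      · intro k _ hk
        rw [if_neg]
        intro hk'
        exact hk (Fin.ext hk')
      · simp
    · rw [Finset.sum_eq_zero]
      · simp
      · intro k _
        rw [if_neg]
        omega
  have hdet : (1 - M).det = 1 := by
    rw [Matrix.det_of_isUpperTriangular]
    · simp [M]
    · intro i k hik
      have hik' : (k : ℕ) < i := hik
      have : i ≠ k := by rintro rfl; omega
      simp only [M, Matrix.sub_apply, Matrix.one_apply_ne this, Matrix.of_apply]
      rw [if_neg (by omega)]
      simp
  rw [← hM, Matrix.det_mul, hdet, one_mul]

/-- The branching rule of `sum_bddFin_succ`, for determinants. -/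
lemma det_jt_succ (w : ℤ → ℕ → ℂ) {r N : ℕ} {lam mu : ℕ → ℕ} (hlam : Antitone lam)
    (hz : ∀ i, r ≤ i → lam i = 0) :
    (jt w r (N + 1) lam mu).det = ∑ nu ∈ strips r lam,
      (∏ i : Fin r, ∏ j ∈ Finset.Ico (nu i) (lam i), w ((j : ℤ) - ((i : ℕ) : ℤ)) (N + 1)) *
        (jt w r N (extz nu) mu).det := by
  let B : Matrix (Fin r) (Fin r) ℂ := fun i => ∑ c ∈ Finset.Icc (lam (i + 1)) (lam i),
    (∏ j ∈ Finset.Ico c (lam i), w ((j : ℤ) - ((i : ℕ) : ℤ)) (N + 1)) •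
      fun j : Fin r => hsum w N ((mu j : ℤ) - ((j : ℕ) : ℤ)) ((c : ℤ) - ((i : ℕ) : ℤ))
  have hAB : (jt w r (N + 1) lam mu).det = B.det := by
    refine det_row_sub _ _ (fun i => (∏ j ∈ Finset.Ico (lam (i + 1)) (lam i),
      w ((j : ℤ) - ((i : ℕ) : ℤ)) (N + 1)) * w ((lam (i + 1) : ℤ) - ((i : ℕ) : ℤ) - 1) (N + 1)) ?_
    intro i j
    simp only [jt, Matrix.of_apply, B, Finset.sum_apply, Pi.smul_apply, smul_eq_mul]
    rw [hsum_telescope w N _ i (lam (i + 1)) (lam i) (hlam (Nat.le_succ _))]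
    congr 1
    split_ifs with hi
    · congr 2
      push_cast
      ring
    · -- The last row: `λ r = 0`, and `μ j - j > -r` makes the remaining sum vanish.
      rw [hsum_neg w _ (by rw [hz (i + 1) (by omega)]; have := j.2; omega), mul_zero]
  rw [hAB]
  have := (Matrix.detRowAlternating (R := ℂ) (n := Fin r)).toMultilinearMap.map_sum_finset
    (fun (i : Fin r) (c : ℕ) =>
      (∏ j ∈ Finset.Ico c (lam i), w ((j : ℤ) - ((i : ℕ) : ℤ)) (N + 1)) •
      fun j : Fin r => hsum w N ((mu j : ℤ) - ((j : ℕ) : ℤ)) ((c : ℤ) - ((i : ℕ) : ℤ)))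
    (fun i : Fin r => Finset.Icc (lam (i + 1)) (lam i))
  refine this.trans (Finset.sum_congr rfl fun nu _ => ?_)
  rw [MultilinearMap.map_smul_univ, smul_eq_mul]
  congr 1
  change Matrix.det _ = _
  congr 1
  ext i j
  simp [jt, extz]

open Classical in
lemma det_jt_zero (w : ℤ → ℕ → ℂ) {r : ℕ} {lam mu : ℕ → ℕ} (hlam : Antitone lam)
    (hmu : Antitone mu) (hz : ∀ i, r ≤ i → lam i = 0) (hzm : ∀ i, r ≤ i → mu i = 0) :
    (jt w r 0 lam mu).det = if lam = mu then 1 else 0 := by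
  split_ifs with h
  · subst h
    have : jt w r 0 lam lam = 1 := by
      ext i j
      simp only [jt, Matrix.of_apply, hsum_zero, Matrix.one_apply]
      refine if_congr ⟨fun h => ?_, fun h => by rw [h]⟩ rfl rfl
      rcases lt_trichotomy (i : ℕ) j with hl | hl | hl
      · have := hlam hl.le
        omega
      · exact Fin.ext hl
      · have := hlam hl.le
        omega
    rw [this, Matrix.det_one]
  · rw [Matrix.det_apply']
    refine Finset.sum_eq_zero fun σ _ => ?_
    rw [mul_eq_zero]
    right
    by_contra hne
    apply h
    rw [← ne_eq, Finset.prod_ne_zero_iff] at hne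
    have key : ∀ i : Fin r, (mu i : ℤ) - ((i : ℕ) : ℤ) =
        (lam (σ i) : ℤ) - ((σ i : ℕ) : ℤ) := by
      intro i
      by_contra hc
      exact hne i (Finset.mem_univ _) (by simp [jt, hsum_zero, hc])
    -- Both `μ i - i` and `λ i - i` are strictly decreasing, so `σ` is increasing.
    have hσ : StrictMono σ := by
      intro i j hij
      by_contra hc
      have h1 := key i
      have h2 := key j
      have h3 : mu j ≤ mu i := hmu (Fin.le_def.1 hij.le)
      have h4 : lam (σ i) ≤ lam (σ j) := hlam (Fin.le_def.1 (not_lt.1 hc))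
      have h5 : (σ j : ℕ) ≤ σ i := not_lt.1 hc
      have h6 : (i : ℕ) < j := hij
      omega
    have hid : ∀ i, σ i = i := by
      have : (σ : Fin r → Fin r) = id := by
        refine (StrictMono.range_inj hσ strictMono_id).1 ?_
        simp [σ.surjective.range_eq]
      exact fun i => congrFun this i
    funext i
    by_cases hi : i < r
    · have := key ⟨i, hi⟩
      rw [hid] at this
      simp only at this
      omega
    · rw [hz i (by omega), hzm i (by omega)]

/-- Jacobi–Trudi for tableaux with entries at most `N` and arbitrary content-dependent weights. -/
theorem sum_bddFin_eq_det (w : ℤ → ℕ → ℂ) {r : ℕ} {mu : ℕ → ℕ} (hmu : Antitone mu)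
    (hzm : ∀ i, r ≤ i → mu i = 0) (N : ℕ) (lam : ℕ → ℕ) (hlam : Antitone lam)
    (hz : ∀ i, r ≤ i → lam i = 0) :
    ∑ m ∈ bddFin N lam mu, wt w r lam mu m = (jt w r N lam mu).det := by
  induction N generalizing lam with
  | zero =>
    classical
    rw [sum_bddFin_zero w hlam hz, det_jt_zero w hlam hmu hz hzm]
  | succ N ih =>
    rw [sum_bddFin_succ w hlam hmu hz, det_jt_succ w hlam hz]
    refine Finset.sum_congr rfl fun nu hnu => ?_
    rw [ih (extz nu) (extz_anti hz hnu) (extz_zero nu)]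

/-! ### Convergence -/

open Filter Topology in
/-- Sums over an increasing exhaustion of a set converge to the `tsum` over the set. -/
lemma tendsto_sum_exhaust {α : Type*} (S : α → Prop) (f : α → ℂ) (T : ℕ → Finset α)
    (hT : Monotone T) (hS : ∀ x, S x ↔ ∃ N, x ∈ T N)
    (hsum : Summable fun x : {x // S x} => f x.1) :
    Tendsto (fun N => ∑ x ∈ T N, f x) atTop (𝓝 (∑' x : {x // S x}, f x.1)) := by
  classical
  have h1 : Tendsto (fun N => (T N).subtype S) atTop atTop := by
    refine tendsto_atTop_finset_of_monotone (fun M N h => Finset.subtype_mono (hT h)) fun x => ?_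
    obtain ⟨N, hN⟩ := (hS x.1).1 x.2
    exact ⟨N, by simpa using hN⟩
  refine (hsum.hasSum.comp h1).congr fun N => ?_
  exact Finset.sum_subtype_of_mem f fun x hx => (hS x).2 ⟨N, hx⟩

lemma summable_pi_prod {n : ℕ} {g : ℕ → ℝ} (hg : ∀ k, 0 ≤ g k) (hs : Summable g) :
    Summable fun f : Fin n → ℕ => ∏ i, g (f i) := by
  classical
  refine summable_of_sum_le (c := ∏ _i : Fin n, ∑' k, g k)
    (fun f => Finset.prod_nonneg fun i _ => hg _) fun u => ?_
  calc ∑ f ∈ u, ∏ i, g (f i)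
      ≤ ∑ f ∈ Fintype.piFinset fun i : Fin n => u.image fun f => f i, ∏ i, g (f i) := by
        refine Finset.sum_le_sum_of_subset_of_nonneg (fun f hf => ?_)
          fun f _ _ => Finset.prod_nonneg fun i _ => hg _
        exact Fintype.mem_piFinset.2 fun i => Finset.mem_image_of_mem _ hf
    _ = ∏ i : Fin n, ∑ k ∈ u.image fun f => f i, g k := by
        rw [Finset.prod_univ_sum]
    _ ≤ ∏ _i : Fin n, ∑' k, g k :=
        Finset.prod_le_prod (fun i _ => Finset.sum_nonneg fun k _ => hg k)
          fun i _ => hs.sum_le_tsum _ fun k _ => hg k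

/-- Absolute convergence of the zeta-star series. With `Re (s last) = 1 + ε`, monotonicity lets
the surplus `m_last ^ (-ε)` be shared equally, leaving exponent `1 + ε / n` at every place. -/
lemma summable_star {n : ℕ} (s : Fin n → ℂ) (h1 : ∀ i, 1 ≤ (s i).re)
    (h2 : ∀ i : Fin n, (i : ℕ) + 1 = n → 1 < (s i).re) :
    Summable fun f : {f : Fin n → ℕ // Monotone f ∧ ∀ i, 0 < f i} =>
      ∏ i, (f.1 i : ℂ) ^ (-(s i)) := by
  rcases n with _ | k
  · exact Summable.of_finite
  have hε := h2 (Fin.last k) (by simp)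
  set ε := (s (Fin.last k)).re - 1 with hεdef
  set δ := ε / (k + 1) with hδdef
  have hk : (0 : ℝ) < k + 1 := by positivity
  have hδ : 0 < δ := div_pos (by rw [hεdef]; linarith) hk
  have hg : Summable fun m : ℕ => (m : ℝ) ^ (-(1 + δ)) :=
    Real.summable_nat_rpow.2 (by linarith)
  have hprod := summable_pi_prod (n := k + 1) (fun m : ℕ => by positivity) hg
  refine Summable.of_norm_bounded
    (g := fun f : {f : Fin (k + 1) → ℕ // Monotone f ∧ ∀ i, 0 < f i} =>
      ∏ i, (f.1 i : ℝ) ^ (-(1 + δ))) (hprod.comp_injective Subtype.val_injective) ?_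
  rintro ⟨f, hmono, hpos⟩
  simp only
  have hone : ∀ i, (1 : ℝ) ≤ f i := fun i => by exact_mod_cast hpos i
  have hpos' : ∀ i, (0 : ℝ) < f i := fun i => by exact_mod_cast hpos i
  rw [norm_prod]
  simp_rw [Complex.norm_natCast_cpow_of_pos (hpos _), Complex.neg_re]
  have e1 : (f (Fin.last k) : ℝ) ^ (-ε) ≤ ∏ i, (f i : ℝ) ^ (-δ) := by
    calc (f (Fin.last k) : ℝ) ^ (-ε) = ∏ _i : Fin (k + 1), (f (Fin.last k) : ℝ) ^ (-δ) := by
          rw [Finset.prod_const, Finset.card_univ, Fintype.card_fin, ← Real.rpow_natCast,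
            ← Real.rpow_mul (hpos' _).le]
          congr 1
          rw [hδdef]
          push_cast
          field_simp
      _ ≤ ∏ i, (f i : ℝ) ^ (-δ) := by
          refine Finset.prod_le_prod (fun i _ => by positivity) fun i _ => ?_
          exact Real.rpow_le_rpow_of_nonpos (hpos' i) (by exact_mod_cast hmono (Fin.le_last i))
            (by linarith)
  have e2 : ∏ i : Fin k, (f i.castSucc : ℝ) ^ (-(s i.castSucc).re) ≤
      ∏ i : Fin k, (f i.castSucc : ℝ) ^ (-1 : ℝ) := by
    refine Finset.prod_le_prod (fun i _ => by positivity) fun i _ => ?_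
    exact Real.rpow_le_rpow_of_exponent_le (hone _) (by linarith [h1 i.castSucc])
  have e3 : (f (Fin.last k) : ℝ) ^ (-(s (Fin.last k)).re) =
      (f (Fin.last k) : ℝ) ^ (-1 : ℝ) * (f (Fin.last k) : ℝ) ^ (-ε) := by
    rw [← Real.rpow_add (hpos' _)]
    congr 1
    rw [hεdef]
    ring
  calc ∏ i, (f i : ℝ) ^ (-(s i).re)
      ≤ (∏ i : Fin k, (f i.castSucc : ℝ) ^ (-1 : ℝ)) *
          ((f (Fin.last k) : ℝ) ^ (-1 : ℝ) * (f (Fin.last k) : ℝ) ^ (-ε)) := by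
        rw [Fin.prod_univ_castSucc, e3]
        exact mul_le_mul_of_nonneg_right e2 (by positivity)
    _ = (∏ i, (f i : ℝ) ^ (-1 : ℝ)) * (f (Fin.last k) : ℝ) ^ (-ε) := by
        rw [Fin.prod_univ_castSucc, mul_assoc]
    _ ≤ (∏ i, (f i : ℝ) ^ (-1 : ℝ)) * ∏ i, (f i : ℝ) ^ (-δ) :=
        mul_le_mul_of_nonneg_left e1 (by positivity)
    _ = ∏ i, (f i : ℝ) ^ (-(1 + δ)) := by
        rw [← Finset.prod_mul_distrib]
        refine Finset.prod_congr rfl fun i _ => ?_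
        rw [← Real.rpow_add (hpos' i)]
        congr 1
        ring

/-- The weight of the zeta function: the entry `m` on the diagonal `k` contributes `m ^ (-a k)`. -/
def zw (a : ℤ → ℂ) (k : ℤ) (m : ℕ) : ℂ := (m : ℂ) ^ (-(a k))

open Filter Topology in
lemma tendsto_hsum (a : ℤ → ℂ) (p q : ℤ) (h1 : ∀ c, p ≤ c → c < q → 1 ≤ (a c).re)
    (h2 : p < q → 1 < (a (q - 1)).re) :
    Tendsto (fun N => hsum (zw a) N p q) atTop (𝓝 (mzvStarSeq a p (q - p))) := by
  unfold hsum mzvStarSeq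
  split_ifs with h
  · exact tendsto_const_nhds
  · refine tendsto_sum_exhaust (fun f : Fin (q - p).toNat → ℕ => Monotone f ∧ ∀ i, 0 < f i)
      (fun f => ∏ i, (f i : ℂ) ^ (-(a (p + ((i : ℕ) : ℤ))))) (fun N => monoSeq N (q - p).toNat)
      ?_ ?_ ?_
    · intro M N hMN f hf
      rw [mem_monoSeq] at hf ⊢
      exact ⟨fun i => ⟨(hf.1 i).1, (hf.1 i).2.trans hMN⟩, hf.2⟩
    · intro f
      constructor
      · rintro ⟨hm, hp⟩
        exact ⟨∑ i, f i, mem_monoSeq.2 ⟨fun i => ⟨hp i,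
          Finset.single_le_sum (fun _ _ => Nat.zero_le _) (Finset.mem_univ i)⟩, hm⟩⟩
      · rintro ⟨N, hN⟩
        rw [mem_monoSeq] at hN
        exact ⟨hN.2, fun i => (hN.1 i).1⟩
    · refine summable_star _ (fun i => h1 _ (by omega) (by have := i.2; omega)) fun i hi => ?_
      have : p + ((i : ℕ) : ℤ) = q - 1 := by have := i.2; omega
      rw [this]
      exact h2 (by have := i.2; omega)

/-- If `σ` contributes no vanishing entry to the Jacobi–Trudi determinant, then every index `c`
occurring in its entries is the content of a box of `λ/μ`. Otherwise every row has
either all its contents above `c` or all below `c`; `σ` preserves this splitting of the rows, but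
the entry involving `c` joins its two parts. -/
lemma content_covered {r : ℕ} {lam mu : ℕ → ℕ} (σ : Equiv.Perm (Fin r))
    (hσ : ∀ i : Fin r, (mu i : ℤ) - ((i : ℕ) : ℤ) ≤ (lam (σ i) : ℤ) - ((σ i : ℕ) : ℤ))
    (i : Fin r) (c : ℤ) (h1 : (mu i : ℤ) - ((i : ℕ) : ℤ) ≤ c)
    (h2 : c < (lam (σ i) : ℤ) - ((σ i : ℕ) : ℤ)) :
    ∃ k : Fin r, (mu k : ℤ) - ((k : ℕ) : ℤ) ≤ c ∧ c < (lam k : ℤ) - ((k : ℕ) : ℤ) := by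
  by_contra hno
  push Not at hno
  have hmaps : ∀ k : Fin r, c < (mu k : ℤ) - ((k : ℕ) : ℤ) →
      c < (mu (σ k) : ℤ) - ((σ k : ℕ) : ℤ) := by
    intro k hk
    by_contra hc
    have a1 := hno (σ k) (not_lt.1 hc)
    have a2 := hσ k
    omega
  let A : Finset (Fin r) := Finset.univ.filter fun k => c < (mu k : ℤ) - ((k : ℕ) : ℤ)
  have hA : A.image σ = A := by
    refine Finset.eq_of_subset_of_card_le (fun x hx => ?_) ?_
    · obtain ⟨k, hk, rfl⟩ := Finset.mem_image.1 hx
      exact Finset.mem_filter.2 ⟨Finset.mem_univ _, hmaps k (Finset.mem_filter.1 hk).2⟩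
    · rw [Finset.card_image_of_injective _ σ.injective]
  have hσi : σ i ∈ A := by
    refine Finset.mem_filter.2 ⟨Finset.mem_univ _, ?_⟩
    by_contra hc
    have := hno (σ i) (not_lt.1 hc)
    omega
  rw [← hA, Finset.mem_image] at hσi
  obtain ⟨k, hk, hki⟩ := hσi
  rw [σ.injective hki] at hk
  have := (Finset.mem_filter.1 hk).2
  omega

open Filter Topology in
/-- The truncated determinants converge. Individual entries of the limiting matrix may be
divergent series, but only in products of the Leibniz expansion that contain a zero entry. -/
lemma tendsto_det {r : ℕ} {lam mu : ℕ → ℕ} (hlam : Antitone lam) (hmu : Antitone mu)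
    (hle : ∀ i, mu i ≤ lam i) (a : ℤ → ℂ)
    (h1 : ∀ i j : ℕ, mu i ≤ j → j < lam i → 1 ≤ (a ((j : ℤ) - i)).re)
    (h2 : ∀ i < r, mu i < lam i → 1 < (a ((lam i : ℤ) - i - 1)).re) :
    Tendsto (fun N => (jt (zw a) r N lam mu).det) atTop
      (𝓝 (Matrix.det (Matrix.of fun i j : Fin r =>
        mzvStarSeq a ((mu (j : ℕ) : ℤ) - ((j : ℕ) : ℤ))
          ((lam (i : ℕ) : ℤ) - (mu (j : ℕ) : ℤ) - ((i : ℕ) : ℤ) + ((j : ℕ) : ℤ))))) := by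
  simp_rw [Matrix.det_apply']
  refine tendsto_finsetSum _ fun σ _ => Tendsto.const_mul _ ?_
  by_cases hσ : ∀ i : Fin r, (mu i : ℤ) - ((i : ℕ) : ℤ) ≤ (lam (σ i) : ℤ) - ((σ i : ℕ) : ℤ)
  · refine tendsto_finsetProd _ fun i _ => ?_
    simp only [jt, Matrix.of_apply]
    have e : (lam (σ i) : ℤ) - (mu i : ℤ) - ((σ i : ℕ) : ℤ) + ((i : ℕ) : ℤ) =
      ((lam (σ i) : ℤ) - ((σ i : ℕ) : ℤ)) - ((mu i : ℤ) - ((i : ℕ) : ℤ)) := by ring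
    rw [e]
    refine tendsto_hsum a _ _ ?_ ?_
    · intro c hc1 hc2
      obtain ⟨k, hk1, hk2⟩ := content_covered σ hσ i c hc1 hc2
      have := h1 k (c + k).toNat (by omega) (by omega)
      have e' : (((c + k).toNat : ℕ) : ℤ) - ((k : ℕ) : ℤ) = c := by omega
      rwa [e'] at this
    · intro hlt
      refine h2 _ (σ i).2 ?_
      by_contra hemp
      -- An empty row `σ i` leaves the diagonal `λ (σ i) - σ i - 1` without boxes.
      obtain ⟨k, hk1, hk2⟩ := content_covered σ hσ i
        ((lam (σ i) : ℤ) - ((σ i : ℕ) : ℤ) - 1) (by omega) (by omega)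
      have h0 := hle (σ i)
      rcases lt_or_ge (k : ℕ) (σ i : ℕ) with hl | hl
      · have := hmu hl.le
        omega
      · have := hlam hl
        rcases hl.eq_or_lt with hl' | hl'
        · rw [← hl'] at hk1
          omega
        · omega
  · push Not at hσ
    obtain ⟨i, hi⟩ := hσ
    have z1 : ∀ N, ∏ i, jt (zw a) r N lam mu (σ i) i = 0 := fun N =>
      Finset.prod_eq_zero (Finset.mem_univ i) (hsum_neg _ _ hi)
    simp_rw [z1]
    rw [Finset.prod_eq_zero (Finset.mem_univ i)]
    · exact tendsto_const_nhds
    · simp only [Matrix.of_apply, mzvStarSeq]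
      rw [if_pos (by omega)]

/-- A tableau has bounded entries, since it vanishes off the finite diagram. -/
lemma exists_bound {r : ℕ} {lam mu : ℕ → ℕ} (hlam : Antitone lam)
    (hz : ∀ i, r ≤ i → lam i = 0) {m : ℕ × ℕ → ℕ} (hm : IsSkewSSYT lam mu m) :
    ∃ N, ∀ p, m p ≤ N := by
  refine ⟨∑ p ∈ Finset.range r ×ˢ Finset.range (lam 0), m p, fun p => ?_⟩
  by_cases hp : InSkew lam mu p
  · refine Finset.single_le_sum (f := m) (fun _ _ => Nat.zero_le _) ?_
    rw [Finset.mem_product, Finset.mem_range, Finset.mem_range]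
    refine ⟨?_, lt_of_lt_of_le hp.2 (hlam (Nat.zero_le _))⟩
    by_contra hr
    have := hp.2
    rw [hz _ (by omega)] at this
    omega
  · simp [hm.zero_off p hp]

open Filter Topology in
/-- Absolute convergence of the skew Schur series: by the truncated formula with the real
exponents `Re a`, its partial sums of absolute values are convergent determinants. -/
lemma summable_skew {r : ℕ} {lam mu : ℕ → ℕ} (hlam : Antitone lam) (hmu : Antitone mu)
    (hle : ∀ i, mu i ≤ lam i) (hz : ∀ i, r ≤ i → lam i = 0) (a : ℤ → ℂ)
    (h1 : ∀ i j : ℕ, mu i ≤ j → j < lam i → 1 ≤ (a ((j : ℤ) - i)).re)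
    (h2 : ∀ i < r, mu i < lam i → 1 < (a ((lam i : ℤ) - i - 1)).re) :
    Summable fun M : {m : ℕ × ℕ → ℕ // IsSkewSSYT lam mu m} => wt (zw a) r lam mu M.1 := by
  classical
  have hzm : ∀ i, r ≤ i → mu i = 0 := fun i hi => by
    have := hle i
    rw [hz i hi] at this
    omega
  have hnorm : ∀ m, IsSkewSSYT lam mu m →
      ((‖wt (zw a) r lam mu m‖ : ℝ) : ℂ) = wt (zw fun k => ((a k).re : ℂ)) r lam mu m := by
    intro m hm
    unfold wt zw
    rw [norm_prod, Complex.ofReal_prod]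
    refine Finset.prod_congr rfl fun i _ => ?_
    rw [norm_prod, Complex.ofReal_prod]
    refine Finset.prod_congr rfl fun j hj => ?_
    rw [Complex.norm_natCast_cpow_of_pos (hm.pos _ (Finset.mem_Ico.1 hj)),
      Complex.ofReal_cpow (Nat.cast_nonneg _)]
    simp
  have ht := tendsto_det (r := r) hlam hmu hle (fun k => ((a k).re : ℂ)) (by simpa using h1)
    (by simpa using h2)
  obtain ⟨C, hC⟩ := ht.norm.bddAbove_range
  have hbound : ∀ N, ∑ m ∈ bddFin N lam mu, ‖wt (zw a) r lam mu m‖ ≤ C := by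
    intro N
    have hdet := sum_bddFin_eq_det (zw fun k => ((a k).re : ℂ)) hmu hzm N lam hlam hz
    have e : ((∑ m ∈ bddFin N lam mu, ‖wt (zw a) r lam mu m‖ : ℝ) : ℂ) =
        (jt (zw fun k => ((a k).re : ℂ)) r N lam mu).det := by
      rw [← hdet, Complex.ofReal_sum]
      exact Finset.sum_congr rfl fun m hm => hnorm m ((mem_bddFin hlam hz).1 hm).2.1
    have h3 := hC (Set.mem_range_self N)
    rw [← e, Complex.norm_real] at h3
    exact (Real.le_norm_self _).trans h3
  refine Summable.of_norm (summable_of_sum_le (c := C) (fun _ => norm_nonneg _) fun u => ?_)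
  choose B hB using fun M : {m : ℕ × ℕ → ℕ // IsSkewSSYT lam mu m} =>
    exists_bound hlam hz M.2
  refine le_trans ?_ (hbound (∑ M ∈ u, B M))
  rw [← Finset.sum_image (s := u) (f := fun m => ‖wt (zw a) r lam mu m‖)
    (g := Subtype.val) (fun _ _ _ _ h => Subtype.ext h)]
  refine Finset.sum_le_sum_of_subset_of_nonneg (fun m hm => ?_) fun _ _ _ => norm_nonneg _
  obtain ⟨M, hM, rfl⟩ := Finset.mem_image.1 hm
  refine (mem_bddFin hlam hz).2 ⟨hle, M.2, fun p => (hB M p).trans ?_⟩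
  exact Finset.single_le_sum (fun _ _ => Nat.zero_le _) hM

end SMZ

/-- Skew Jacobi–Trudi formula of `H`-type for Schur multiple zeta functions. -/
theorem skewSchurZeta_jacobiTrudi_H
    (r : ℕ) (lam mu : ℕ → ℕ) (hlm : SMZ.IsSkewPairWith r lam mu)
    (s : ℕ × ℕ → ℂ) (a : ℤ → ℂ)
    (hW : SMZ.MemWSkew lam mu s)
    (hdiag : ∀ p : ℕ × ℕ, SMZ.InSkew lam mu p → s p = a ((p.2 : ℤ) - (p.1 : ℤ)))
    (hre : ∀ i < r, 1 < (s (i, lam i - 1)).re) :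
    SMZ.skewSchurZeta r lam mu s =
      Matrix.det (Matrix.of fun i j : Fin r =>
        SMZ.mzvStarSeq a ((mu (j : ℕ) : ℤ) - ((j : ℕ) : ℤ))
          ((lam (i : ℕ) : ℤ) - (mu (j : ℕ) : ℤ) - ((i : ℕ) : ℤ) + ((j : ℕ) : ℤ))) := by
  classical
  obtain ⟨hlam, hmu, hle, hz⟩ := hlm
  have hzm : ∀ i, r ≤ i → mu i = 0 := fun i hi => by
    have := hle i
    rw [hz i hi] at this
    omega
  have h1 : ∀ i j : ℕ, mu i ≤ j → j < lam i → 1 ≤ (a ((j : ℤ) - i)).re := by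
    intro i j hi hj
    have h := hW.1 (i, j) ⟨hi, hj⟩
    rwa [hdiag (i, j) ⟨hi, hj⟩] at h
  have h2 : ∀ i < r, mu i < lam i → 1 < (a ((lam i : ℤ) - i - 1)).re := by
    intro i hi hlt
    have h := hre i hi
    rw [hdiag (i, lam i - 1) ⟨by simp only; omega, by simp only; omega⟩] at h
    have e : (((lam i - 1 : ℕ) : ℤ) - (i : ℤ)) = (lam i : ℤ) - i - 1 := by omega
    simp only at h
    rwa [e] at h
  have hterm : ∀ m, SMZ.skewTerm r lam mu s m = SMZ.wt (SMZ.zw a) r lam mu m := by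
    intro m
    unfold SMZ.skewTerm SMZ.wt SMZ.zw
    refine Finset.prod_congr rfl fun i _ => Finset.prod_congr rfl fun j hj => ?_
    rw [hdiag (i, j) (Finset.mem_Ico.1 hj)]
  unfold SMZ.skewSchurZeta
  simp_rw [hterm]
  have hdet := SMZ.tendsto_det (r := r) hlam hmu hle a h1 h2
  have hsum := SMZ.tendsto_sum_exhaust (SMZ.IsSkewSSYT lam mu) (SMZ.wt (SMZ.zw a) r lam mu)
    (fun N => SMZ.bddFin N lam mu) ?_ ?_ (SMZ.summable_skew hlam hmu hle hz a h1 h2)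
  · simp_rw [SMZ.sum_bddFin_eq_det (SMZ.zw a) hmu hzm _ lam hlam hz] at hsum
    exact tendsto_nhds_unique hsum hdet
  · intro M N hMN m hm
    rw [SMZ.mem_bddFin hlam hz] at hm ⊢
    exact ⟨hm.1, hm.2.1, fun p => (hm.2.2 p).trans hMN⟩
  · intro m
    constructor
    · intro hm
      obtain ⟨N, hN⟩ := SMZ.exists_bound hlam hz hm
      exact ⟨N, (SMZ.mem_bddFin hlam hz).2 ⟨hle, hm, hN⟩⟩
    · rintro ⟨N, hN⟩
      exact ((SMZ.mem_bddFin hlam hz).1 hN).2.1
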